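/- The function F : [0, ∞) → ℝ defined by F(γ) = (π/2) · (1 + γ) / [ e^{−γ/2} + √(πγ/2) · Erf(√(γ/2)) ]² is strictly decreasing; consequently, for every γ ≥ 0 one has F(γ) > F(1) = π / [ e^{−1/2} + √(π/2) · Erf(1/√2) ]² if and only if γ < 1. -/

import Mathlib

/-- The error function `Erf(x) = (2/√π) ∫₀^x e^{−t²} dt`. -/
noncomputable def erf (x : ℝ) : ℝ :=
  (2 / Real.sqrt Real.pi) * ∫ t in (0 : ℝ)..x, Real.exp (-t ^ 2)

/-- The moment product `M₊₁ M₋₁` as a function of the shape parameter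
`γ = μ²/σ²`:
`F(γ) = (π/2)(1+γ)/[e^{−γ/2} + √(πγ/2) Erf(√(γ/2))]²`. -/
noncomputable def momentProduct (γ : ℝ) : ℝ :=
  (Real.pi / 2) * (1 + γ) /
    (Real.exp (-γ / 2) + Real.sqrt (Real.pi * γ / 2) * erf (Real.sqrt (γ / 2))) ^ 2

noncomputable def gI (x : ℝ) : ℝ := ∫ t in (0 : ℝ)..x, Real.exp (-t ^ 2)

noncomputable def gD (x : ℝ) : ℝ := Real.exp (-x ^ 2) + 2 * x * gI x

noncomputable def gG (x : ℝ) : ℝ := (1 + 2 * x ^ 2) / gD x ^ 2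

lemma hasDerivAt_gI (x : ℝ) : HasDerivAt gI (Real.exp (-x ^ 2)) x := by
  have hc : Continuous (fun t : ℝ => Real.exp (-t ^ 2)) := by fun_prop
  exact intervalIntegral.integral_hasDerivAt_right (hc.intervalIntegrable _ _)
    (hc.stronglyMeasurableAtFilter _ _) hc.continuousAt

lemma hasDerivAt_gE (x : ℝ) :
    HasDerivAt (fun x : ℝ => Real.exp (-x ^ 2)) (Real.exp (-x ^ 2) * (-(2 * x))) x := by
  have h := ((hasDerivAt_pow 2 x).neg).exp
  simpa using h

lemma hasDerivAt_gD (x : ℝ) : HasDerivAt gD (2 * gI x) x := by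
  have h := (hasDerivAt_gE x).add (((hasDerivAt_id x).const_mul 2).mul (hasDerivAt_gI x))
  refine h.congr_deriv ?_
  simp only [id]
  ring

lemma gI_nonneg {x : ℝ} (hx : 0 ≤ x) : 0 ≤ gI x :=
  intervalIntegral.integral_nonneg hx (fun t _ => (Real.exp_pos _).le)

lemma gD_pos {x : ℝ} (hx : 0 ≤ x) : 0 < gD x := by
  have := gI_nonneg hx
  have := Real.exp_pos (-x ^ 2)
  unfold gD
  positivity

lemma gI_gt {x : ℝ} (hx : 0 < x) : x * Real.exp (-x ^ 2) < gI x := by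
  have hd : ∀ y, HasDerivAt (fun y => gI y - y * Real.exp (-y ^ 2))
      (2 * y ^ 2 * Real.exp (-y ^ 2)) y := fun y => by
    have h := (hasDerivAt_gI y).sub ((hasDerivAt_id y).mul (hasDerivAt_gE y))
    refine h.congr_deriv ?_
    simp only [id]
    ring
  have hm : StrictMonoOn (fun y => gI y - y * Real.exp (-y ^ 2)) (Set.Ici 0) := by
    apply strictMonoOn_of_deriv_pos (convex_Ici 0)
    · exact fun y _ => (hd y).continuousAt.continuousWithinAt
    · intro y hy
      rw [interior_Ici] at hy
      have hy' : 0 < y := hy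
      rw [(hd y).deriv]
      positivity
  have := hm (Set.mem_Ici.2 le_rfl) (Set.mem_Ici.2 hx.le) hx
  simp [gI] at this
  simpa [gI] using this

lemma gG_anti : StrictAntiOn gG (Set.Ici 0) := by
  have hd : ∀ y, 0 ≤ y → HasDerivAt gG
      (4 * gD y * (y * Real.exp (-y ^ 2) - gI y) / (gD y ^ 2) ^ 2) y := fun y hy => by
    have h := ((((hasDerivAt_pow 2 y).const_mul 2).const_add 1)).div
      ((hasDerivAt_gD y).pow 2) (pow_pos (gD_pos hy) 2).ne'
    refine h.congr_deriv ?_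
    congr 1
    simp only [Pi.pow_apply]
    push_cast
    unfold gD
    ring
  apply strictAntiOn_of_deriv_neg (convex_Ici 0)
  · exact fun y hy => (hd y hy).continuousAt.continuousWithinAt
  · intro y hy
    rw [interior_Ici] at hy
    have hy' : 0 < y := hy
    rw [(hd y hy'.le).deriv]
    have := gD_pos hy'.le
    have h2 := gI_gt hy'
    apply div_neg_of_neg_of_pos _ (by positivity)
    exact mul_neg_of_pos_of_neg (by positivity) (by linarith)

lemma momentProduct_eq {γ : ℝ} (h : 0 ≤ γ) :
    momentProduct γ = Real.pi / 2 * gG (Real.sqrt (γ / 2)) := by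
  have hp : Real.sqrt Real.pi ≠ 0 := (Real.sqrt_pos.2 Real.pi_pos).ne'
  have hs : Real.sqrt (γ / 2) ^ 2 = γ / 2 := Real.sq_sqrt (by positivity)
  have hm : Real.sqrt (Real.pi * γ / 2) = Real.sqrt Real.pi * Real.sqrt (γ / 2) := by
    rw [← Real.sqrt_mul Real.pi_pos.le, mul_div_assoc]
  have hD : Real.exp (-γ / 2) + Real.sqrt (Real.pi * γ / 2) * erf (Real.sqrt (γ / 2))
      = gD (Real.sqrt (γ / 2)) := by
    unfold gD erf
    rw [hs, hm, neg_div]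
    change _ + _ * (_ * gI _) = _
    field_simp
  unfold momentProduct gG
  rw [hD, hs, mul_div_assoc]
  congr 3
  ring

lemma momentProduct_anti : StrictAntiOn momentProduct (Set.Ici (0 : ℝ)) := by
  intro a ha b hb hab
  have ha' : 0 ≤ a := ha
  rw [momentProduct_eq ha, momentProduct_eq hb]
  refine mul_lt_mul_of_pos_left (gG_anti (Real.sqrt_nonneg _) (Real.sqrt_nonneg _) ?_)
    (by positivity)
  exact Real.sqrt_lt_sqrt (by positivity) (by linarith)

/-- `F` is strictly decreasing on `[0, ∞)`; consequently, for every `γ ≥ 0`,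
`F(γ) > F(1) = π/[e^{−1/2} + √(π/2) Erf(1/√2)]²` if and only if `γ < 1`. -/
theorem stmt17 :
    StrictAntiOn momentProduct (Set.Ici (0 : ℝ)) ∧
      momentProduct 1 =
        Real.pi / (Real.exp (-(1 : ℝ) / 2) + Real.sqrt (Real.pi / 2) * erf (1 / Real.sqrt 2)) ^ 2 ∧
      ∀ γ ≥ (0 : ℝ), (momentProduct 1 < momentProduct γ ↔ γ < 1) := by
  refine ⟨momentProduct_anti, ?_, fun γ hγ => ?_⟩
  · unfold momentProduct
    rw [mul_one, Real.sqrt_div zero_le_one 2, Real.sqrt_one]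
    congr 1
    ring
  · exact momentProduct_anti.lt_iff_gt (Set.mem_Ici.2 zero_le_one) hγ
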